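/- Let ρ*(t) = (3/2)√(1−t) for t ∈ [0,1]. Then ρ* satisfies t = 1 − (4/9)·ρ*(t)² for all t ∈ [0,1], one has ∫_0^x 1/ρ*(t) dt = (4/3)·(1 − √(1−x)) for all x ∈ [0,1], and ∫_0^1 ( ∫_0^x 1/ρ*(t) dt ) dx = 4/9 = (1/(p+1))·((p+2)/(p+1))^{p/2} with p = 2; in particular ρ* attains the minimal value of the functional J(ρ) = ∫_0^1 ( ∫_0^x 1/ρ(t) dt ) dx over all probability densities ρ on [0,1]. -/

import Mathlib

open MeasureTheory ENNReal

lemma aux_sqrt_deriv {t : ℝ} (ht : t < 1) :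
    HasDerivAt (fun t : ℝ => Real.sqrt (1 - t)) (-1 / (2 * Real.sqrt (1 - t))) t := by
  have h : HasDerivAt (fun t : ℝ => 1 - t) (-1) t := by
    simpa using (hasDerivAt_id t).const_sub 1
  exact h.sqrt (by linarith)

lemma aux_inner {x : ℝ} (h0 : 0 ≤ x) (h1 : x ≤ 1) :
    ∫ t in (0:ℝ)..x, 1 / ((3 / 2) * Real.sqrt (1 - t)) = (4 / 3) * (1 - Real.sqrt (1 - x)) := by
  have hc : ContinuousOn (fun t : ℝ => -(4 / 3) * Real.sqrt (1 - t)) (Set.Icc 0 x) := by fun_prop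
  have hd : ∀ t ∈ Set.Ioo (0:ℝ) x, HasDerivAt (fun t : ℝ => -(4 / 3) * Real.sqrt (1 - t))
      (1 / ((3 / 2) * Real.sqrt (1 - t))) t := by
    intro t ht
    have h := (aux_sqrt_deriv (lt_of_lt_of_le ht.2 h1)).const_mul (-(4 / 3))
    refine h.congr_deriv ?_
    have : 0 < Real.sqrt (1 - t) := Real.sqrt_pos.2 (by linarith [ht.2])
    field_simp
    norm_num
  have hi := intervalIntegral.integrableOn_deriv_of_nonneg hc hd (fun t _ => by positivity)
  rw [intervalIntegral.integral_eq_sub_of_hasDerivAt_of_le h0 hc hd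
    ((intervalIntegrable_iff_integrableOn_Ioc_of_le h0).2 hi)]
  simp
  ring

lemma aux_sqrt : ∫ t in (0:ℝ)..1, Real.sqrt (1 - t) = 2 / 3 := by
  have hc : ContinuousOn (fun t : ℝ => -(2 / 3) * ((1 - t) * Real.sqrt (1 - t))) (Set.Icc 0 1) := by
    fun_prop
  rw [intervalIntegral.integral_eq_sub_of_hasDerivAt_of_le zero_le_one hc]
  · simp
  · intro t ht
    have h : HasDerivAt (fun t : ℝ => 1 - t) (-1) t := by
      simpa using (hasDerivAt_id t).const_sub 1
    have h2 := (h.mul (aux_sqrt_deriv ht.2)).const_mul (-(2 / 3))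
    refine h2.congr_deriv ?_
    have h3 : 0 < Real.sqrt (1 - t) := Real.sqrt_pos.2 (by linarith [ht.2])
    have h4 : Real.sqrt (1 - t) ^ 2 = 1 - t := Real.sq_sqrt (by linarith [ht.2])
    field_simp
    rw [h4]
    ring
  · exact Continuous.intervalIntegrable (by fun_prop) _ _

lemma aux_swap (g : ℝ → ℝ≥0∞) (hg : Measurable g) :
    ∫⁻ x in Set.Icc (0 : ℝ) 1, ∫⁻ t in Set.Ico (0 : ℝ) x, g t
      = ∫⁻ t in Set.Icc (0 : ℝ) 1, ENNReal.ofReal (1 - t) * g t := by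
  have e : ∀ x ∈ Set.Icc (0:ℝ) 1, ∫⁻ t in Set.Ico (0 : ℝ) x, g t
      = ∫⁻ t in Set.Icc (0:ℝ) 1, (Set.Ioi t).indicator (fun _ => g t) x := by
    intro x hx
    rw [← lintegral_indicator measurableSet_Ico, ← lintegral_indicator measurableSet_Icc]
    congr 1
    ext t
    simp only [Set.indicator, Set.mem_Ico, Set.mem_Icc, Set.mem_Ioi]
    have := hx.2
    split_ifs <;> first | rfl | (exfalso; grind)
  rw [setLIntegral_congr_fun measurableSet_Icc e, lintegral_lintegral_swap]
  · refine setLIntegral_congr_fun measurableSet_Icc fun t ht => ?_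
    rw [lintegral_indicator measurableSet_Ioi, setLIntegral_const, mul_comm,
      Measure.restrict_apply measurableSet_Ioi]
    congr 1
    have : Set.Ioi t ∩ Set.Icc 0 1 = Set.Ioc t 1 := by
      ext y; simp only [Set.mem_inter_iff, Set.mem_Ioi, Set.mem_Icc, Set.mem_Ioc]
      have := ht.1
      grind
    rw [this, Real.volume_Ioc]
  · have : Function.uncurry (fun (x t : ℝ) => (Set.Ioi t).indicator (fun _ => g t) x)
        = {p : ℝ × ℝ | p.2 < p.1}.indicator (fun p => g p.2) := by
      ext ⟨x, t⟩; simp [Set.indicator]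
    rw [this]
    exact ((hg.comp measurable_snd).indicator
      (measurableSet_lt measurable_snd measurable_fst)).aemeasurable

lemma aux_amgm (t : ℝ) (ht : t ≤ 1) (r : ℝ≥0∞) :
    ENNReal.ofReal (4 / 3 * Real.sqrt (1 - t))
      ≤ ENNReal.ofReal (1 - t) * (1 / r) + ENNReal.ofReal (4 / 9) * r := by
  rcases ht.eq_or_lt with rfl | ht
  · simp
  have hp : 0 < 1 - t := by linarith
  rcases eq_or_ne r ⊤ with rfl | hr
  · rw [ENNReal.mul_top (by simp)]; simp
  rcases eq_or_ne r 0 with rfl | h0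
  · rw [one_div, ENNReal.inv_zero, ENNReal.mul_top (by simpa using ht)]; simp
  have hr' : 0 < r.toReal := ENNReal.toReal_pos h0 hr
  rw [← ENNReal.ofReal_toReal hr, one_div, ← ENNReal.ofReal_inv_of_pos hr',
    ← ENNReal.ofReal_mul hp.le, ← ENNReal.ofReal_mul (by norm_num),
    ← ENNReal.ofReal_add (by positivity) (by positivity)]
  apply ENNReal.ofReal_le_ofReal
  set a := r.toReal
  have h4 : Real.sqrt (1 - t) ^ 2 = 1 - t := Real.sq_sqrt hp.le
  set s := Real.sqrt (1 - t)
  rw [← h4]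
  have : s ^ 2 * a⁻¹ + 4 / 9 * a - 4 / 3 * s = (s - 2 / 3 * a) ^ 2 * a⁻¹ := by
    field_simp
    ring
  have : 0 ≤ (s - 2 / 3 * a) ^ 2 * a⁻¹ := by positivity
  linarith

lemma aux_lint : ∫⁻ t in Set.Icc (0:ℝ) 1, ENNReal.ofReal (4 / 3 * Real.sqrt (1 - t))
    = ENNReal.ofReal (8 / 9) := by
  rw [← ofReal_integral_eq_lintegral_ofReal]
  · rw [integral_Icc_eq_integral_Ioc, ← intervalIntegral.integral_of_le zero_le_one,
      intervalIntegral.integral_const_mul, aux_sqrt]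
    norm_num
  · exact ContinuousOn.integrableOn_Icc (by fun_prop)
  · exact Filter.Eventually.of_forall fun t => by positivity

/-- For `ρ*(t) = (3/2)√(1-t)` one has `t = 1 - (4/9)ρ*(t)²`,
`∫_0^x 1/ρ* = (4/3)(1 - √(1-x))`, and
`∫_0^1 (∫_0^x 1/ρ*) dx = 4/9 = (1/(p+1))((p+2)/(p+1))^{p/2}` with `p = 2`;
in particular `ρ*` attains the minimal value of `J(ρ) = ∫_0^1 (∫_0^x 1/ρ) dx`
over all probability densities on `[0,1]`. -/
theorem optimal_density_p_two_attains_min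
    (ρstar : ℝ → ℝ)
    (hρ : ∀ t, ρstar t = (3 / 2) * Real.sqrt (1 - t)) :
    (∀ t ∈ Set.Icc (0 : ℝ) 1, t = 1 - (4 / 9) * ρstar t ^ 2) ∧
    (∀ x ∈ Set.Icc (0 : ℝ) 1,
        (∫ t in Set.Ico (0 : ℝ) x, 1 / ρstar t)
          = (4 / 3) * (1 - Real.sqrt (1 - x))) ∧
    (∫ x in Set.Icc (0 : ℝ) 1, ∫ t in Set.Ico (0 : ℝ) x, 1 / ρstar t)
      = 4 / 9 ∧
    (4 / 9 : ℝ) = (1 / (2 + 1)) * ((2 + 2) / (2 + 1) : ℝ) ^ ((2 : ℝ) / 2) ∧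
    (∀ ρ : ℝ → ℝ≥0∞, Measurable ρ →
        (∫⁻ t in Set.Icc (0 : ℝ) 1, ρ t) = 1 →
        ENNReal.ofReal (4 / 9)
          ≤ ∫⁻ x in Set.Icc (0 : ℝ) 1, ∫⁻ t in Set.Ico (0 : ℝ) x, 1 / ρ t) := by
  have key : ∀ x ∈ Set.Icc (0 : ℝ) 1,
      (∫ t in Set.Ico (0 : ℝ) x, 1 / ρstar t) = (4 / 3) * (1 - Real.sqrt (1 - x)) := by
    intro x hx
    simp only [hρ]
    rw [integral_Ico_eq_integral_Ioc, ← intervalIntegral.integral_of_le hx.1,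
      aux_inner hx.1 hx.2]
  refine ⟨?_, key, ?_, ?_, ?_⟩
  · intro t ht
    rw [hρ, mul_pow, Real.sq_sqrt (by linarith [ht.2])]
    ring
  · rw [setIntegral_congr_fun measurableSet_Icc key, integral_Icc_eq_integral_Ioc,
      ← intervalIntegral.integral_of_le zero_le_one, intervalIntegral.integral_const_mul,
      intervalIntegral.integral_sub (by simp)
        (Continuous.intervalIntegrable (by fun_prop) _ _), aux_sqrt]
    norm_num
  · norm_num
  · intro ρ hm h1
    rw [aux_swap _ (by fun_prop)]
    have h : ENNReal.ofReal (8 / 9) ≤ (∫⁻ t in Set.Icc (0 : ℝ) 1,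
        ENNReal.ofReal (1 - t) * (1 / ρ t)) + ENNReal.ofReal (4 / 9) := by
      calc ENNReal.ofReal (8 / 9)
          = ∫⁻ t in Set.Icc (0:ℝ) 1, ENNReal.ofReal (4 / 3 * Real.sqrt (1 - t)) := aux_lint.symm
        _ ≤ ∫⁻ t in Set.Icc (0:ℝ) 1,
            (ENNReal.ofReal (1 - t) * (1 / ρ t) + ENNReal.ofReal (4 / 9) * ρ t) :=
          setLIntegral_mono' measurableSet_Icc fun t ht => aux_amgm t ht.2 _
        _ = _ := by
          rw [lintegral_add_right _ (by fun_prop), lintegral_const_mul _ hm, h1, mul_one]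
    have h2 : ENNReal.ofReal (8 / 9) = ENNReal.ofReal (4 / 9) + ENNReal.ofReal (4 / 9) := by
      rw [← ENNReal.ofReal_add (by norm_num) (by norm_num)]; norm_num
    rw [h2] at h
    exact (ENNReal.add_le_add_iff_right ENNReal.ofReal_ne_top).1 h
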